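/- arXiv:1906.09820 — 2 statements merged into one kernel-verified Lean document; each statement's English description precedes it below -/
import Mathlib

section
/- Let a^i, e^i (i = 1,2,3) be degree-1 elements of Λ, da^i, de^i degree-2 elements of Λ, and α a real number. Define F^i := da^i + (1/2)ε_{ijk}a^j∧a^k, T^i := de^i + ε_{ijk}a^j∧e^k, A_+^i := a^i + α e^i, A_-^i := a^i + (α−1) e^i, dA_+^i := da^i + α·de^i, dA_-^i := da^i + (α−1)·de^i, and F_±^i := dA_±^i + (1/2)ε_{ijk}A_±^j∧A_±^k. Then Σ_i F_-^i∧F_+^i = (((1−α)² + α²)/2)·ε_{ijk} e^i∧e^j∧F^k + (α(1−α)(1−2α)/2)·ε_{ijk} T^i∧e^j∧e^k + α(α−1)·Σ_i T^i∧T^i? No — the full identity reads: Σ_i F_-^i∧F_+^i = (((1−α)²+α²)/2)·Σ_{i,j,k} ε_{ijk} e^i∧e^j∧F^k + (α(1−α)(1−2α)/2)·Σ_{i,j,k} ε_{ijk} T^i∧e^j∧e^k + α(α−1)·Σ_i T^i∧T^i + (2α−1)·Σ_i T^i∧F^i + Σ_i F^i∧F^i. -/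
/-!
The curvature of the connection `a + r e` is the quadratic polynomial `F + r T + (r² / 2) [e ∧ e]`
in `r`. Even elements of the exterior algebra are central, so multiplying the polynomials for `r`
and `s` gives every term of the decomposition together with the extra term
`(r² s² / 4) ∑ i, [e ∧ e]ⁱ ∧ [e ∧ e]ⁱ`. The latter vanishes by the Jacobi identity, because
`e^j ∧ e^k ∧ e^l` is invariant under cyclic permutations. Here `ε` can be replaced by the structure
constants of any metric Lie algebra in an orthonormal basis.
-/

/-- The Levi-Civita symbol on `{0,1,2}` (totally antisymmetric, `ε 0 1 2 = 1`). -/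
noncomputable def eps (i j k : Fin 3) : ℝ :=
  ((j : ℝ) - (i : ℝ)) * ((k : ℝ) - (i : ℝ)) * ((k : ℝ) - (j : ℝ)) / 2

open ExteriorAlgebra

section EvenElements

variable {R M : Type*} [CommRing R] [AddCommGroup M] [Module R M]

lemma ι_mul_ι_swap (x y : M) : ι R x * ι R y = -(ι R y * ι R x) :=
  eq_neg_of_add_eq_zero_left (ι_add_mul_swap x y)

lemma mul_ι_eq_neg_one_pow_smul {n : ℕ} {x : ExteriorAlgebra R M} (hx : x ∈ ⋀[R]^n M) (v : M) :
    x * ι R v = (-1 : R) ^ n • (ι R v * x) := by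
  induction hx using Submodule.pow_induction_on_left' with
  | algebraMap r => simp only [pow_zero, one_smul, Algebra.commutes]
  | add x y n _ _ hx hy => rw [add_mul, hx, hy, mul_add, smul_add]
  | mem_mul w hw n x _ hx =>
    obtain ⟨w, rfl⟩ := hw
    rw [mul_assoc, hx, mul_smul_comm, ← mul_assoc, ι_mul_ι_swap w v, neg_mul, mul_assoc,
      pow_succ, mul_neg_one, neg_smul, smul_neg]

lemma mem_center_of_mem_exteriorPower_of_even {n : ℕ} (hn : Even n) {x : ExteriorAlgebra R M}
    (hx : x ∈ ⋀[R]^n M) : x ∈ Subalgebra.center R (ExteriorAlgebra R M) := by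
  refine Subalgebra.mem_center_iff.mpr fun y => ?_
  induction y using ExteriorAlgebra.induction with
  | algebraMap r => exact Algebra.commutes r x
  | ι v => rw [mul_ι_eq_neg_one_pow_smul hx, hn.neg_one_pow, one_smul]
  | mul y z hy hz => exact Commute.mul_left hy hz
  | add y z hy hz => exact Commute.add_left hy hz

lemma ι_mul_ι_mem_exteriorPower_two (x y : M) : ι R x * ι R y ∈ ⋀[R]^2 M := by
  rw [exteriorPower, pow_two]
  exact Submodule.mul_mem_mul (LinearMap.mem_range_self _ x) (LinearMap.mem_range_self _ y)

lemma ι_mul_ι_mem_center (x y : M) :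
    ι R x * ι R y ∈ Subalgebra.center R (ExteriorAlgebra R M) :=
  mem_center_of_mem_exteriorPower_of_even even_two (ι_mul_ι_mem_exteriorPower_two x y)

lemma ι_mul_ι_mul_ι_rotate (x y z : M) :
    ι R x * ι R y * ι R z = ι R z * ι R x * ι R y := by
  rw [mul_assoc (ι R z), Subalgebra.mem_center_iff.mp (ι_mul_ι_mem_center x y)]

lemma three_smul_sum_smul_ι_mul_ι_mul_ι_eq_zero {I : Type*} [Fintype I] (g : I → I → I → R)
    (hg : ∀ j k l, g j k l + g k l j + g l j k = 0) (x : I → M) :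
    (3 : R) • ∑ j, ∑ k, ∑ l, g j k l • (ι R (x j) * ι R (x k) * ι R (x l)) = 0 := by
  have rotate (h : I → I → I → R) :
      ∑ j, ∑ k, ∑ l, h j k l • (ι R (x j) * ι R (x k) * ι R (x l)) =
        ∑ j, ∑ k, ∑ l, h k l j • (ι R (x j) * ι R (x k) * ι R (x l)) := by
    rw [Finset.sum_comm_cycle]
    simp only [ι_mul_ι_mul_ι_rotate (x _) (x _) (x _)]
  have sum_rotations : ∑ j, ∑ k, ∑ l,
      (g j k l + g k l j + g l j k) • (ι R (x j) * ι R (x k) * ι R (x l)) = 0 := by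
    simp only [hg, zero_smul, Finset.sum_const_zero]
  simp only [add_smul, Finset.sum_add_distrib] at sum_rotations
  rw [← rotate fun j k l => g k l j, ← rotate g] at sum_rotations
  rw [← sum_rotations]
  module

end EvenElements

/-- The families `c i j k` of structure constants `[T_j, T_k] = ∑ i, c i j k T_i` of a metric Lie
algebra in an orthonormal basis `T`. Invariance of the metric is encoded as invariance of `c` under
cyclic permutations of its indices. -/
structure IsMetricLieStructure {R I : Type*} [CommRing R] [Fintype I] (c : I → I → I → R) :
    Prop where
  swap_right : ∀ i j k, c i k j = -c i j k
  rotate : ∀ i j k, c j k i = c i j k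
  jacobi : ∀ j k l m,
    ∑ i, c i j k * c i l m + ∑ i, c i k l * c i j m + ∑ i, c i l j * c i k m = 0

lemma isMetricLieStructure_eps : IsMetricLieStructure eps where
  swap_right i j k := by unfold eps; ring
  rotate i j k := by unfold eps; ring
  jacobi j k l m := by
    fin_cases j <;> fin_cases k <;> fin_cases l <;> fin_cases m <;>
      norm_num [eps, Fin.sum_univ_three]

section WedgeBracket

variable {R M I : Type*} [CommRing R] [AddCommGroup M] [Module R M] [Fintype I]

/-- The components `[x ∧ y]ⁱ = c_{ijk} x^j ∧ y^k` of the bracket of two Lie-algebra-valued degree-1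
elements `x`, `y`, for the Lie algebra with structure constants `c`. -/
def wedgeBracket (c : I → I → I → R) (x y : I → M) (i : I) : ExteriorAlgebra R M :=
  ∑ j, ∑ k, c i j k • (ι R (x j) * ι R (y k))

variable {c : I → I → I → R}

lemma wedgeBracket_mem_center (c : I → I → I → R) (x y : I → M) (i : I) :
    wedgeBracket c x y i ∈ Subalgebra.center R (ExteriorAlgebra R M) :=
  sum_mem fun _ _ => sum_mem fun _ _ => Subalgebra.smul_mem _ (ι_mul_ι_mem_center _ _) _

lemma wedgeBracket_comm {i : I} (hc : ∀ j k, c i k j = -c i j k) (x y : I → M) :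
    wedgeBracket c x y i = wedgeBracket c y x i := by
  unfold wedgeBracket
  rw [Finset.sum_comm]
  refine Finset.sum_congr rfl fun j _ => Finset.sum_congr rfl fun k _ => ?_
  rw [hc j k, ι_mul_ι_swap (x k), neg_smul_neg]

lemma wedgeBracket_add_smul_self {i : I} (hc : ∀ j k, c i k j = -c i j k) (x y : I → M) (r : R) :
    wedgeBracket c (x + r • y) (x + r • y) i =
      wedgeBracket c x x i + (2 * r) • wedgeBracket c x y i + r ^ 2 • wedgeBracket c y y i := by
  have expand : wedgeBracket c (x + r • y) (x + r • y) i =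
      wedgeBracket c x x i + r • wedgeBracket c x y i + r • wedgeBracket c y x i
        + r ^ 2 • wedgeBracket c y y i := by
    simp only [wedgeBracket, Finset.smul_sum, ← Finset.sum_add_distrib]
    refine Finset.sum_congr rfl fun j _ => Finset.sum_congr rfl fun k _ => ?_
    simp only [Pi.add_apply, Pi.smul_apply, map_add, map_smul, add_mul, mul_add, smul_mul_assoc,
      mul_smul_comm]
    module
  rw [expand, wedgeBracket_comm hc y x]
  module

lemma sum_smul_ι_mul_ι_mul (hc : ∀ i j k, c j k i = c i j k) (x y : I → M)
    (G : I → ExteriorAlgebra R M) :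
    ∑ i, ∑ j, ∑ k, c i j k • (ι R (x i) * ι R (y j) * G k) =
      ∑ i, wedgeBracket c x y i * G i := by
  simp only [wedgeBracket, Finset.sum_mul, smul_mul_assoc]
  rw [Finset.sum_comm_cycle]
  simp only [hc]

lemma sum_smul_mul_ι_mul_ι (c : I → I → I → R) (x y : I → M) (G : I → ExteriorAlgebra R M) :
    ∑ i, ∑ j, ∑ k, c i j k • (G i * ι R (x j) * ι R (y k)) =
      ∑ i, G i * wedgeBracket c x y i := by
  simp only [wedgeBracket, Finset.mul_sum, mul_smul_comm, mul_assoc]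

lemma IsMetricLieStructure.three_smul_sum_wedgeBracket_mul_ι (hc : IsMetricLieStructure c)
    (x : I → M) (m : I) :
    (3 : R) • ∑ i, ∑ l, c i l m • (wedgeBracket c x x i * ι R (x l)) = 0 := by
  have collect : ∑ i, ∑ l, c i l m • (wedgeBracket c x x i * ι R (x l)) =
      ∑ j, ∑ k, ∑ l, (∑ i, c i j k * c i l m) • (ι R (x j) * ι R (x k) * ι R (x l)) := by
    calc
      _ = ∑ i, ∑ l, ∑ j, ∑ k, (c i j k * c i l m) • (ι R (x j) * ι R (x k) * ι R (x l)) := by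
        simp only [wedgeBracket, Finset.sum_mul, Finset.smul_sum, smul_mul_assoc, smul_smul,
          mul_comm (c _ _ m)]
      _ = ∑ i, ∑ j, ∑ k, ∑ l, (c i j k * c i l m) • (ι R (x j) * ι R (x k) * ι R (x l)) :=
        Finset.sum_congr rfl fun _ _ => Finset.sum_comm_cycle.symm
      _ = ∑ j, ∑ i, ∑ k, ∑ l, (c i j k * c i l m) • (ι R (x j) * ι R (x k) * ι R (x l)) :=
        Finset.sum_comm
      _ = ∑ j, ∑ k, ∑ l, ∑ i, (c i j k * c i l m) • (ι R (x j) * ι R (x k) * ι R (x l)) :=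
        Finset.sum_congr rfl fun _ _ => Finset.sum_comm_cycle.symm
      _ = _ := by simp only [Finset.sum_smul]
  rw [collect]
  exact three_smul_sum_smul_ι_mul_ι_mul_ι_eq_zero _ (fun j k l => hc.jacobi j k l m) x

lemma IsMetricLieStructure.three_smul_sum_wedgeBracket_mul_self (hc : IsMetricLieStructure c)
    (x : I → M) :
    (3 : R) • ∑ i, wedgeBracket c x x i * wedgeBracket c x x i = 0 := by
  have collect : ∑ i, wedgeBracket c x x i * wedgeBracket c x x i =
      ∑ m, (∑ i, ∑ l, c i l m • (wedgeBracket c x x i * ι R (x l))) * ι R (x m) := by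
    rw [← sum_smul_mul_ι_mul_ι, Finset.sum_comm_cycle]
    simp only [Finset.sum_mul, smul_mul_assoc]
  rw [collect, Finset.smul_sum]
  refine Finset.sum_eq_zero fun m _ => ?_
  rw [← smul_mul_assoc, hc.three_smul_sum_wedgeBracket_mul_ι, zero_mul]

end WedgeBracket

lemma add_smul_add_sq_smul_mul {K A : Type*} [Field K] [Ring A] [Algebra K A]
    {F T E : A} (hFT : Commute F T) (hFE : Commute F E) (hTE : Commute T E) (r s : K) :
    (F + r • T + (r ^ 2 / 2) • E) * (F + s • T + (s ^ 2 / 2) • E) =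
      ((r ^ 2 + s ^ 2) / 2) • (E * F) + (r * s * (r + s) / 2) • (T * E)
        + (r * s) • (T * T) + (r + s) • (T * F) + F * F
        + (r ^ 2 / 2 * (s ^ 2 / 2)) • (E * E) := by
  simp only [add_mul, mul_add, smul_mul_assoc, mul_smul_comm, hFT.eq, hFE.eq, ← hTE.eq]
  module

section Curvature

variable {K V I : Type*} [Field K] [AddCommGroup V] [Module K V] [Fintype I]

/-- The curvature `Fⁱ = daⁱ + ½ [a ∧ a]ⁱ` of a connection `a`. The exterior derivative `da` is an
independent argument, as `ExteriorAlgebra K V` carries no differential. -/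
def curvatureForm (c : I → I → I → K) (a : I → V) (da : I → ExteriorAlgebra K V) (i : I) :
    ExteriorAlgebra K V :=
  da i + (1 / 2 : K) • wedgeBracket c a a i

/-- The torsion `Tⁱ = deⁱ + [a ∧ e]ⁱ` of a coframe `e` with respect to a connection `a`, with the
exterior derivative `de` as an independent argument. -/
def torsionForm (c : I → I → I → K) (a e : I → V) (de : I → ExteriorAlgebra K V) (i : I) :
    ExteriorAlgebra K V :=
  de i + wedgeBracket c a e i

lemma torsionForm_mem_center (c : I → I → I → K) (a e : I → V) {de : I → ExteriorAlgebra K V}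
    {i : I} (hde : de i ∈ Subalgebra.center K (ExteriorAlgebra K V)) :
    torsionForm c a e de i ∈ Subalgebra.center K (ExteriorAlgebra K V) :=
  add_mem hde (wedgeBracket_mem_center c a e i)

variable [CharZero K] {c : I → I → I → K}

lemma curvatureForm_add_smul {i : I} (hc : ∀ j k, c i k j = -c i j k) (a e : I → V)
    (da de : I → ExteriorAlgebra K V) (r : K) :
    curvatureForm c (a + r • e) (da + r • de) i =
      curvatureForm c a da i + r • torsionForm c a e de i
        + (r ^ 2 / 2) • wedgeBracket c e e i := by
  simp only [curvatureForm, torsionForm, wedgeBracket_add_smul_self hc, Pi.add_apply,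
    Pi.smul_apply]
  module

lemma IsMetricLieStructure.sum_wedgeBracket_mul_self (hc : IsMetricLieStructure c) (x : I → V) :
    ∑ i, wedgeBracket c x x i * wedgeBracket c x x i = 0 :=
  (smul_eq_zero.mp (hc.three_smul_sum_wedgeBracket_mul_self x)).resolve_left three_ne_zero

lemma IsMetricLieStructure.sum_curvatureForm_mul_curvatureForm (hc : IsMetricLieStructure c)
    (a e : I → V) (da : I → ExteriorAlgebra K V) {de : I → ExteriorAlgebra K V}
    (hde : ∀ i, de i ∈ Subalgebra.center K (ExteriorAlgebra K V)) (r s : K) :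
    ∑ i, curvatureForm c (a + r • e) (da + r • de) i *
        curvatureForm c (a + s • e) (da + s • de) i =
      ((r ^ 2 + s ^ 2) / 2) • ∑ i, wedgeBracket c e e i * curvatureForm c a da i
        + (r * s * (r + s) / 2) • ∑ i, torsionForm c a e de i * wedgeBracket c e e i
        + (r * s) • ∑ i, torsionForm c a e de i * torsionForm c a e de i
        + (r + s) • ∑ i, torsionForm c a e de i * curvatureForm c a da i
        + ∑ i, curvatureForm c a da i * curvatureForm c a da i := by
  have expand (i : I) := add_smul_add_sq_smul_mul
    (Subalgebra.mem_center_iff.mp (torsionForm_mem_center c a e (hde i)) (curvatureForm c a da i))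
    (Subalgebra.mem_center_iff.mp (wedgeBracket_mem_center c e e i) (curvatureForm c a da i))
    (Subalgebra.mem_center_iff.mp (wedgeBracket_mem_center c e e i) (torsionForm c a e de i)) r s
  simp only [curvatureForm_add_smul (hc.swap_right _), expand, Finset.sum_add_distrib,
    ← Finset.smul_sum, hc.sum_wedgeBracket_mul_self e, smul_zero, add_zero]

theorem statement6_general (hc : IsMetricLieStructure c)
    (a e : I → V) (da de : I → ExteriorAlgebra K V)
    (hde : ∀ i, de i ∈ Subalgebra.center K (ExteriorAlgebra K V)) (α : K)
    (F T : I → ExteriorAlgebra K V)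
    (hF : ∀ i, F i = da i + (1 / 2 : K) • ∑ j, ∑ k, c i j k • (ι K (a j) * ι K (a k)))
    (hT : ∀ i, T i = de i + ∑ j, ∑ k, c i j k • (ι K (a j) * ι K (e k)))
    (Ap Am : I → V)
    (hAp : ∀ i, Ap i = a i + α • e i) (hAm : ∀ i, Am i = a i + (α - 1) • e i)
    (dAp dAm : I → ExteriorAlgebra K V)
    (hdAp : ∀ i, dAp i = da i + α • de i) (hdAm : ∀ i, dAm i = da i + (α - 1) • de i)
    (Fp Fm : I → ExteriorAlgebra K V)
    (hFp : ∀ i, Fp i = dAp i + (1 / 2 : K) • ∑ j, ∑ k, c i j k • (ι K (Ap j) * ι K (Ap k)))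
    (hFm : ∀ i, Fm i = dAm i + (1 / 2 : K) • ∑ j, ∑ k, c i j k • (ι K (Am j) * ι K (Am k))) :
    ∑ i, Fm i * Fp i
      = (((1 - α) ^ 2 + α ^ 2) / 2) •
          ∑ i, ∑ j, ∑ k, c i j k • (ι K (e i) * ι K (e j) * F k)
        + ((α * (1 - α) * (1 - 2 * α)) / 2) •
          ∑ i, ∑ j, ∑ k, c i j k • (T i * ι K (e j) * ι K (e k))
        + (α * (α - 1)) • ∑ i, T i * T i
        + (2 * α - 1) • ∑ i, T i * F i
        + ∑ i, F i * F i := by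
  obtain rfl : F = curvatureForm c a da := funext hF
  obtain rfl : T = torsionForm c a e de := funext hT
  obtain rfl : Ap = a + α • e := funext hAp
  obtain rfl : Am = a + (α - 1) • e := funext hAm
  obtain rfl : dAp = da + α • de := funext hdAp
  obtain rfl : dAm = da + (α - 1) • de := funext hdAm
  obtain rfl : Fp = curvatureForm c (a + α • e) (da + α • de) := funext hFp
  obtain rfl : Fm = curvatureForm c (a + (α - 1) • e) (da + (α - 1) • de) := funext hFm
  rw [sum_smul_ι_mul_ι_mul hc.rotate, sum_smul_mul_ι_mul_ι,
    hc.sum_curvatureForm_mul_curvatureForm a e da hde]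
  module

end Curvature

/-- decomposition of the two-connection Pontryagin-type Lagrangian
`Σ_i F_-^i∧F_+^i` into Husain–Kuchař, torsion and Pontryagin terms:
`Σ_i F_-^i∧F_+^i = (((1−α)²+α²)/2)·ε_{ijk} e^i∧e^j∧F^k
  + (α(1−α)(1−2α)/2)·ε_{ijk} T^i∧e^j∧e^k + α(α−1)·Σ_i T^i∧T^i
  + (2α−1)·Σ_i T^i∧F^i + Σ_i F^i∧F^i`,
where `A_±^i = a^i + αe^i, a^i + (α−1)e^i`. -/
theorem statement6 {V : Type*} [AddCommGroup V] [Module ℝ V]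
    (a e : Fin 3 → V) (da de : Fin 3 → ExteriorAlgebra ℝ V)
    (hda : ∀ i, da i ∈ ⋀[ℝ]^2 V) (hde : ∀ i, de i ∈ ⋀[ℝ]^2 V) (α : ℝ)
    (F T : Fin 3 → ExteriorAlgebra ℝ V)
    (hF : ∀ i, F i = da i + (1 / 2 : ℝ) •
      ∑ j : Fin 3, ∑ k : Fin 3, eps i j k • (ι ℝ (a j) * ι ℝ (a k)))
    (hT : ∀ i, T i = de i +
      ∑ j : Fin 3, ∑ k : Fin 3, eps i j k • (ι ℝ (a j) * ι ℝ (e k)))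
    (Ap Am : Fin 3 → V)
    (hAp : ∀ i, Ap i = a i + α • e i) (hAm : ∀ i, Am i = a i + (α - 1) • e i)
    (dAp dAm : Fin 3 → ExteriorAlgebra ℝ V)
    (hdAp : ∀ i, dAp i = da i + α • de i) (hdAm : ∀ i, dAm i = da i + (α - 1) • de i)
    (Fp Fm : Fin 3 → ExteriorAlgebra ℝ V)
    (hFp : ∀ i, Fp i = dAp i + (1 / 2 : ℝ) •
      ∑ j : Fin 3, ∑ k : Fin 3, eps i j k • (ι ℝ (Ap j) * ι ℝ (Ap k)))
    (hFm : ∀ i, Fm i = dAm i + (1 / 2 : ℝ) •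
      ∑ j : Fin 3, ∑ k : Fin 3, eps i j k • (ι ℝ (Am j) * ι ℝ (Am k))) :
    ∑ i : Fin 3, Fm i * Fp i
      = (((1 - α) ^ 2 + α ^ 2) / 2) •
          ∑ i : Fin 3, ∑ j : Fin 3, ∑ k : Fin 3,
            eps i j k • (ι ℝ (e i) * ι ℝ (e j) * F k)
        + ((α * (1 - α) * (1 - 2 * α)) / 2) •
          ∑ i : Fin 3, ∑ j : Fin 3, ∑ k : Fin 3,
            eps i j k • (T i * ι ℝ (e j) * ι ℝ (e k))
        + (α * (α - 1)) • ∑ i : Fin 3, T i * T i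
        + (2 * α - 1) • ∑ i : Fin 3, T i * F i
        + ∑ i : Fin 3, F i * F i :=   statement6_general isMetricLieStructure_eps a e da de
    (fun i => mem_center_of_mem_exteriorPower_of_even even_two (hde i)) α F T hF hT
    Ap Am hAp hAm dAp dAm hdAp hdAm Fp Fm hFp hFm
end

section
/- Let α₁, α₂, α₃, α₄, α₅ be real numbers with 4α₂α₃ − α₅² ≠ 0 and 2α₃α₄ − α₁α₅ = 0, let M be a real vector space and u, X, Y ∈ M satisfying 2α₂·X + α₄·u + α₅·Y = 0 and α₁·u + 2α₃·Y + α₅·X = 0. Then X = 0 and Y + (Λ/2)·u = 0, where Λ = (4α₁α₂ − 2α₄α₅)/(4α₂α₃ − α₅²). (With X = De_i, Y = F_i, u = ε_{ijk}e^j∧e^k these are the torsion-free equations of 3-dimensional Euclidean general relativity with cosmological constant Λ.) -/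
/-! Viewed as a `2 × 2` linear system for `X` and `Y` with right-hand side a multiple of `u`, the
field equations have determinant `4α₂α₃ − α₅²`. Cramer's rule therefore expresses both unknowns as
multiples of `u`, and the coefficient of `u` in `X` is proportional to `2α₃α₄ − α₁α₅`. -/

theorem det_smul_add_smul_eq_zero {R M : Type*} [CommRing R] [AddCommGroup M] [Module R M]
    {a b c d p q : R} {x y u : M}
    (h₁ : a • x + b • y + p • u = 0) (h₂ : c • x + d • y + q • u = 0) :
    (a * d - b * c) • x + (d * p - b * q) • u = 0 := by
  linear_combination (norm := module) d • h₁ - b • h₂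

section Field

variable {K M : Type*} [Field K] [AddCommGroup M] [Module K M]

theorem add_div_det_smul_eq_zero {a b c d p q : K} {x y u : M} (hdet : a * d - b * c ≠ 0)
    (h₁ : a • x + b • y + p • u = 0) (h₂ : c • x + d • y + q • u = 0) :
    x + ((d * p - b * q) / (a * d - b * c)) • u = 0 := by
  apply (smul_eq_zero_iff_right hdet).mp
  rw [smul_add, smul_smul, mul_div_cancel₀ _ hdet]
  exact det_smul_add_smul_eq_zero h₁ h₂

theorem statement10_general [NeZero (2 : K)] {α₁ α₂ α₃ α₄ α₅ : K}
    (hdet : 4 * α₂ * α₃ - α₅ ^ 2 ≠ 0) {u X Y : M}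
    (hX : (2 * α₂) • X + α₄ • u + α₅ • Y = 0)
    (hY : α₁ • u + (2 * α₃) • Y + α₅ • X = 0) :
    X + ((2 * α₃ * α₄ - α₁ * α₅) / (4 * α₂ * α₃ - α₅ ^ 2)) • u = 0 ∧
      Y + (((4 * α₁ * α₂ - 2 * α₄ * α₅) / (4 * α₂ * α₃ - α₅ ^ 2)) / 2) • u = 0 := by
  have det_eq : 2 * α₂ * (2 * α₃) - α₅ * α₅ = 4 * α₂ * α₃ - α₅ ^ 2 := by ring
  have det_swap_eq : 2 * α₃ * (2 * α₂) - α₅ * α₅ = 4 * α₂ * α₃ - α₅ ^ 2 := by ring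
  have hX' : (2 * α₂) • X + α₅ • Y + α₄ • u = 0 := by rw [← hX]; abel
  have hY' : α₅ • X + (2 * α₃) • Y + α₁ • u = 0 := by rw [← hY]; abel
  constructor
  · have hsol := add_div_det_smul_eq_zero (det_eq ▸ hdet) hX' hY'
    rwa [det_eq, mul_comm α₅] at hsol
  · have half_numerator : (4 * α₁ * α₂ - 2 * α₄ * α₅) / 2 = 2 * α₂ * α₁ - α₅ * α₄ := by
      field_simp
      ring
    rw [add_comm (_ • X)] at hX' hY'
    have hsol := add_div_det_smul_eq_zero (det_swap_eq ▸ hdet) hY' hX'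
    rwa [det_swap_eq, ← half_numerator, div_right_comm] at hsol

end Field

/-- for `4α₂α₃ − α₅² ≠ 0` and `2α₃α₄ − α₁α₅ = 0`, the boundary field
equations imply `X = 0` and `Y + (Λ/2)·u = 0` with
`Λ = (4α₁α₂ − 2α₄α₅)/(4α₂α₃ − α₅²)` (torsion-free 3-dimensional Euclidean GR with
cosmological constant `Λ`). -/
theorem statement10 (α₁ α₂ α₃ α₄ α₅ : ℝ) (h : 4 * α₂ * α₃ - α₅ ^ 2 ≠ 0)
    (h' : 2 * α₃ * α₄ - α₁ * α₅ = 0)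
    {M : Type*} [AddCommGroup M] [Module ℝ M] (u X Y : M)
    (h1 : (2 * α₂) • X + α₄ • u + α₅ • Y = 0)
    (h2 : α₁ • u + (2 * α₃) • Y + α₅ • X = 0) :
    X = 0 ∧
      Y + (((4 * α₁ * α₂ - 2 * α₄ * α₅) / (4 * α₂ * α₃ - α₅ ^ 2)) / 2) • u = 0 := by
  simpa only [h', zero_div, zero_smul, add_zero] using statement10_general h h1 h2
end
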